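/- arXiv:2210.13931 — 3 statements merged into one kernel-verified Lean document; each statement's English description precedes it below -/
import Mathlib

section
/- Let f_1,…,f_m : ℝ^d → ℝ be differentiable with each ∇f_i being L-Lipschitz continuous, and set f = (1/m)Σ_{i=1}^m f_i (so ∇f is L-Lipschitz). Let η > 0 and let x, g, s ∈ ℝ^{m×d} satisfy s̄ = ḡ, and set x̄⁺ = x̄ − η s̄. Define U = ‖(1/m)Σ_{i=1}^m (g(i) − ∇f_i(x(i)))‖² and C = ‖x − 𝟙x̄ᵀ‖² + η²‖s − 𝟙s̄ᵀ‖². Then f(x̄⁺) ≤ f(x̄) − (η/2)‖∇f(x̄)‖² + η U + (L²η/m) C − (1/(2η) − L/2)‖x̄⁺ − x̄‖². -/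
open scoped BigOperators

noncomputable section

/-- Frobenius norm of a matrix represented by its rows (Euclidean norm for vectors). -/
def fnorm {m : ℕ} {E : Type} [NormedAddCommGroup E] (u : Fin m → E) : ℝ :=
  Real.sqrt (∑ i, ‖u i‖ ^ 2)

/-- Average of the rows of a matrix: `ū = (1/m) 𝟙ᵀ u`. -/
def rowAvg {m : ℕ} {E : Type} [AddCommGroup E] [Module ℝ E] (u : Fin m → E) : E :=
  (m : ℝ)⁻¹ • ∑ i, u i

/-- Action of the gossip matrix `W` on the rows of `u`. -/
def gossipMul {m : ℕ} (W : Fin m → Fin m → ℝ) {E : Type} [AddCommGroup E] [Module ℝ E]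
    (u : Fin m → E) : Fin m → E :=
  fun i => ∑ j, W i j • u j

/-- The pair `(u^(k), u^(k-1))` of the Chebyshev-accelerated gossip recursion
`u^(k+1) = (1+η_u) W u^(k) - η_u u^(k-1)` with
`η_u = (1 - √(1-λ₂²))/(1 + √(1-λ₂²))`. -/
def fastMixPair {m : ℕ} (W : Fin m → Fin m → ℝ) (lam : ℝ) {E : Type} [AddCommGroup E]
    [Module ℝ E] (u0 : Fin m → E) : ℕ → (Fin m → E) × (Fin m → E)
  | 0 => (u0, u0)
  | K + 1 =>
      let p := fastMixPair W lam u0 K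
      let etau := (1 - Real.sqrt (1 - lam ^ 2)) / (1 + Real.sqrt (1 - lam ^ 2))
      ((1 + etau) • gossipMul W p.1 - etau • p.2, p.1)

/-- `FastMix(u⁰, K) = u^(K)`. -/
def fastMix {m : ℕ} (W : Fin m → Fin m → ℝ) (lam : ℝ) {E : Type} [AddCommGroup E]
    [Module ℝ E] (u0 : Fin m → E) (K : ℕ) : Fin m → E :=
  (fastMixPair W lam u0 K).1

/-!
By the descent lemma, a step `y ↦ y - η v` decreases `f` as an exact gradient step would, up to the
error `(η / 2) ‖v - ∇f y‖²`. For `y = x̄` and `v = ḡ` this error splits through the average of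
`∇f_i (x i)`: one part is the estimation error `U`, the other is controlled by the consensus error
`‖x - 𝟙x̄ᵀ‖²` because each `∇f_i` is `L`-Lipschitz.
-/

section InexactGradientStep

variable {E : Type*} [NormedAddCommGroup E] {f : E → ℝ} {L : ℝ}

theorem le_add_fderiv_add_sq_of_fderiv_sub_le [NormedSpace ℝ E] (hf : Differentiable ℝ f) {x : E}
    (hL : ∀ v, (fderiv ℝ f (x + v) - fderiv ℝ f x) v ≤ L * ‖v‖ ^ 2) (v : E) :
    f (x + v) ≤ f x + fderiv ℝ f x v + L / 2 * ‖v‖ ^ 2 := by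
  have hasDeriv_along (t : ℝ) :
      HasDerivAt (fun t : ℝ ↦ f (x + t • v)) (fderiv ℝ f (x + t • v) v) t := by
    have hline : HasDerivAt (fun t : ℝ ↦ x + t • v) v t := by
      simpa using ((hasDerivAt_id t).smul_const v).const_add x
    exact (hf _).hasFDerivAt.comp_hasDerivAt t hline
  have hasDeriv_bound (t : ℝ) :
      HasDerivAt (fun t : ℝ ↦ f x + t * fderiv ℝ f x v + L / 2 * ‖v‖ ^ 2 * t ^ 2)
        (fderiv ℝ f x v + L * ‖v‖ ^ 2 * t) t := by
    refine ((((hasDerivAt_id t).mul_const (fderiv ℝ f x v)).const_add (f x)).add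
      ((hasDerivAt_pow 2 t).const_mul (L / 2 * ‖v‖ ^ 2))).congr_deriv ?_
    simp only [one_mul, Nat.cast_ofNat, Nat.add_one_sub_one, pow_one]
    ring
  have deriv_le (t : ℝ) (ht : t ∈ Set.Ico 0 1) :
      fderiv ℝ f (x + t • v) v ≤ fderiv ℝ f x v + L * ‖v‖ ^ 2 * t := by
    obtain rfl | ht_pos := ht.1.eq_or_lt
    · simp
    · have h := hL (t • v)
      rw [map_smul, smul_eq_mul, norm_smul, Real.norm_of_nonneg ht.1, sub_apply] at h
      refine sub_le_iff_le_add'.1 (le_of_mul_le_mul_left (h.trans_eq ?_) ht_pos)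
      ring
  have at_one := image_le_of_deriv_right_le_deriv_boundary
    (fun t _ ↦ (hasDeriv_along t).continuousAt.continuousWithinAt)
    (fun t _ ↦ (hasDeriv_along t).hasDerivWithinAt) (by simp)
    (fun t _ ↦ (hasDeriv_bound t).continuousAt.continuousWithinAt)
    (fun t _ ↦ (hasDeriv_bound t).hasDerivWithinAt) deriv_le
    (Set.right_mem_Icc.2 zero_le_one)
  simpa using at_one

theorem inner_sub_le_mul_norm_sq [InnerProductSpace ℝ E] {G : E → E} {y : E}
    (hG : ∀ z, ‖G z - G y‖ ≤ L * ‖z - y‖) (v : E) :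
    inner ℝ (G (y + v) - G y) v ≤ L * ‖v‖ ^ 2 :=
  calc inner ℝ (G (y + v) - G y) v ≤ ‖G (y + v) - G y‖ * ‖v‖ := real_inner_le_norm _ _
    _ ≤ L * ‖y + v - y‖ * ‖v‖ := by gcongr; exact hG _
    _ = L * ‖v‖ ^ 2 := by rw [add_sub_cancel_left, mul_assoc, sq]

theorem inexact_gradient_step_le [InnerProductSpace ℝ E] [CompleteSpace E]
    (hf : Differentiable ℝ f) {y : E}
    (hL : ∀ v, inner ℝ (gradient f (y + v) - gradient f y) v ≤ L * ‖v‖ ^ 2) (η : ℝ) (v : E) :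
    f (y - η • v) ≤ f y - η / 2 * ‖gradient f y‖ ^ 2 + η / 2 * ‖v - gradient f y‖ ^ 2
      - (η / 2 - L / 2 * η ^ 2) * ‖v‖ ^ 2 := by
  have descent : f (y + -(η • v)) ≤ f y + inner ℝ (gradient f y) (-(η • v))
      + L / 2 * ‖-(η • v)‖ ^ 2 := by
    rw [inner_gradient_left]
    refine le_add_fderiv_add_sq_of_fderiv_sub_le hf (fun w ↦ ?_) _
    simpa only [inner_sub_left, inner_gradient_left, sub_apply] using hL w
  rw [← sub_eq_add_neg, inner_neg_right, real_inner_smul_right, norm_neg, norm_smul, mul_pow,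
    Real.norm_eq_abs, sq_abs] at descent
  rw [norm_sub_sq_real, real_inner_comm]
  linarith

end InexactGradientStep

section RowAvg

variable {m : ℕ} {E F : Type} [NormedAddCommGroup E] [NormedAddCommGroup F]

theorem fnorm_sq (u : Fin m → E) : fnorm u ^ 2 = ∑ i, ‖u i‖ ^ 2 :=
  Real.sq_sqrt (Finset.sum_nonneg fun _ _ ↦ sq_nonneg _)

theorem fnorm_sq_le_of_norm_le {u : Fin m → E} {w : Fin m → F} {L : ℝ}
    (h : ∀ i, ‖u i‖ ≤ L * ‖w i‖) : fnorm u ^ 2 ≤ L ^ 2 * fnorm w ^ 2 := by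
  simp only [fnorm_sq, Finset.mul_sum, ← mul_pow]
  gcongr with i
  exact h i

theorem rowAvg_sub {M : Type} [AddCommGroup M] [Module ℝ M] (u v : Fin m → M) :
    rowAvg (u - v) = rowAvg u - rowAvg v := by
  simp only [rowAvg, Pi.sub_apply, Finset.sum_sub_distrib, smul_sub]

theorem norm_rowAvg_le [NormedSpace ℝ E] (u : Fin m → E) :
    ‖rowAvg u‖ ≤ (∑ i, ‖u i‖) / m := by
  rw [rowAvg, norm_smul, norm_inv, Real.norm_natCast, inv_mul_eq_div]
  gcongr
  exact norm_sum_le _ _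

theorem norm_rowAvg_le_of_norm_le [NormedSpace ℝ E] (hm : 0 < m) {u : Fin m → E} {c : ℝ}
    (h : ∀ i, ‖u i‖ ≤ c) : ‖rowAvg u‖ ≤ c :=
  calc ‖rowAvg u‖ ≤ (∑ i, ‖u i‖) / m := norm_rowAvg_le u
    _ ≤ (∑ _i : Fin m, c) / m := by gcongr with i; exact h i
    _ = c := by simp [hm.ne']

theorem norm_rowAvg_sq_le [NormedSpace ℝ E] (u : Fin m → E) :
    ‖rowAvg u‖ ^ 2 ≤ fnorm u ^ 2 / m :=
  calc ‖rowAvg u‖ ^ 2 ≤ ((∑ i, ‖u i‖) / m) ^ 2 := by gcongr; exact norm_rowAvg_le u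
    _ ≤ fnorm u ^ 2 / m := by
      simpa only [fnorm_sq, Finset.card_univ, Fintype.card_fin] using
        sum_div_card_sq_le_sum_sq_div_card (s := Finset.univ) (f := fun i ↦ ‖u i‖)

theorem norm_rowAvg_sub_rowAvg_sq_le [NormedSpace ℝ F] {G : Fin m → E → F} {L : ℝ}
    (hG : ∀ i a b, ‖G i a - G i b‖ ≤ L * ‖a - b‖) (g : Fin m → F) (x y : Fin m → E) :
    ‖rowAvg g - rowAvg (fun i ↦ G i (y i))‖ ^ 2
      ≤ 2 * (‖rowAvg (fun i ↦ g i - G i (x i))‖ ^ 2 + L ^ 2 / m * fnorm (x - y) ^ 2) := by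
  set estimation := rowAvg (fun i ↦ g i - G i (x i)) with estimation_def
  set consensus := rowAvg (fun i ↦ G i (x i) - G i (y i)) with consensus_def
  have split : rowAvg g - rowAvg (fun i ↦ G i (y i)) = estimation + consensus := by
    rw [estimation_def, consensus_def, ← Pi.sub_def, ← Pi.sub_def, rowAvg_sub, rowAvg_sub,
      sub_add_sub_cancel]
  have consensus_le : ‖consensus‖ ^ 2 ≤ L ^ 2 / m * fnorm (x - y) ^ 2 :=
    calc ‖consensus‖ ^ 2 ≤ fnorm (fun i ↦ G i (x i) - G i (y i)) ^ 2 / m := norm_rowAvg_sq_le _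
      _ ≤ L ^ 2 * fnorm (x - y) ^ 2 / m := by
        gcongr
        exact fnorm_sq_le_of_norm_le fun i ↦ hG i _ _
      _ = L ^ 2 / m * fnorm (x - y) ^ 2 := by ring
  calc ‖rowAvg g - rowAvg (fun i ↦ G i (y i))‖ ^ 2
      ≤ (‖estimation‖ + ‖consensus‖) ^ 2 := by rw [split]; gcongr; exact norm_add_le _ _
    _ ≤ 2 * (‖estimation‖ ^ 2 + ‖consensus‖ ^ 2) := add_sq_le
    _ ≤ 2 * (‖estimation‖ ^ 2 + L ^ 2 / m * fnorm (x - y) ^ 2) := by gcongr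

theorem hasGradientAt_rowAvg [InnerProductSpace ℝ E] [CompleteSpace E] {f : Fin m → E → ℝ}
    {f' : Fin m → E} {x : E} (hf : ∀ i, HasGradientAt (f i) (f' i) x) :
    HasGradientAt (fun z ↦ rowAvg fun i ↦ f i z) (rowAvg f') x := by
  rw [hasGradientAt_iff_hasFDerivAt, rowAvg, map_smul, map_sum]
  exact (HasFDerivAt.fun_sum fun i _ ↦ (hf i).hasFDerivAt).const_smul (m : ℝ)⁻¹

end RowAvg

theorem statement7_general {m : ℕ} (hm : 0 < m) {E : Type} [NormedAddCommGroup E]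
    [InnerProductSpace ℝ E] [CompleteSpace E] {L η : ℝ} (hη : 0 < η) {fi : Fin m → E → ℝ}
    (hdiff : ∀ i, Differentiable ℝ (fi i))
    (hL : ∀ i, ∀ x x' : E, ‖gradient (fi i) x - gradient (fi i) x'‖ ≤ L * ‖x - x'‖)
    {f : E → ℝ} (hf : ∀ x, f x = (m : ℝ)⁻¹ * ∑ i, fi i x) (x g : Fin m → E) :
    f (rowAvg x - η • rowAvg g) ≤ f (rowAvg x)
      - (η / 2) * ‖gradient f (rowAvg x)‖ ^ 2
      + η * ‖(m : ℝ)⁻¹ • ∑ i, (g i - gradient (fi i) (x i))‖ ^ 2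
      + (L ^ 2 * η / (m : ℝ)) * fnorm (x - fun _ => rowAvg x) ^ 2
      - (1 / (2 * η) - L / 2) * ‖(rowAvg x - η • rowAvg g) - rowAvg x‖ ^ 2 := by
  have hgrad (z : E) : HasGradientAt f (rowAvg fun i ↦ gradient (fi i) z) z := by
    rw [show f = fun z ↦ rowAvg fun i ↦ fi i z from funext hf]
    exact hasGradientAt_rowAvg fun i ↦ (hdiff i z).hasGradientAt
  have hLip (a b : E) : ‖gradient f a - gradient f b‖ ≤ L * ‖a - b‖ := by
    rw [(hgrad a).gradient, (hgrad b).gradient, ← rowAvg_sub]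
    exact norm_rowAvg_le_of_norm_le hm fun i ↦ hL i a b
  have hstep := inexact_gradient_step_le (fun z ↦ (hgrad z).differentiableAt)
    (inner_sub_le_mul_norm_sq fun z ↦ hLip z (rowAvg x)) η (rowAvg g)
  have herror := norm_rowAvg_sub_rowAvg_sq_le hL g x fun _ ↦ rowAvg x
  rw [← (hgrad (rowAvg x)).gradient] at herror
  have hlength : (1 / (2 * η) - L / 2) * ‖(rowAvg x - η • rowAvg g) - rowAvg x‖ ^ 2
      = (η / 2 - L / 2 * η ^ 2) * ‖rowAvg g‖ ^ 2 := by
    rw [sub_sub_cancel_left, norm_neg, norm_smul, Real.norm_of_nonneg hη.le]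
    field_simp
  rw [hlength, ← rowAvg]
  linear_combination hstep + η / 2 * herror

theorem statement7 (m d : ℕ) (hm : 1 ≤ m) (hd : 1 ≤ d) (L η : ℝ) (hη : 0 < η)
    (fi : Fin m → EuclideanSpace ℝ (Fin d) → ℝ)
    (hdiff : ∀ i, Differentiable ℝ (fi i))
    (hL : ∀ i, ∀ x x' : EuclideanSpace ℝ (Fin d),
      ‖gradient (fi i) x - gradient (fi i) x'‖ ≤ L * ‖x - x'‖)
    (f : EuclideanSpace ℝ (Fin d) → ℝ)
    (hf : ∀ x, f x = (m : ℝ)⁻¹ * ∑ i, fi i x)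
    (x g s : Fin m → EuclideanSpace ℝ (Fin d))
    (hsg : rowAvg s = rowAvg g) :
    f (rowAvg x - η • rowAvg s) ≤ f (rowAvg x)
      - (η / 2) * ‖gradient f (rowAvg x)‖ ^ 2
      + η * ‖(m : ℝ)⁻¹ • ∑ i, (g i - gradient (fi i) (x i))‖ ^ 2
      + (L ^ 2 * η / (m : ℝ)) *
          (fnorm (x - fun _ => rowAvg x) ^ 2 + η ^ 2 * fnorm (s - fun _ => rowAvg s) ^ 2)
      - (1 / (2 * η) - L / 2) * ‖(rowAvg x - η • rowAvg s) - rowAvg x‖ ^ 2 := by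
  rw [hsg]
  exact (statement7_general hm hη hdiff hL hf x g).trans <| by
    gcongr; exact le_add_of_nonneg_right (by positivity)
end
end

section
/- Let h_1,…,h_n : ℝ^d → ℝ be differentiable and L-average smooth, set H = (1/n)Σ_{j=1}^n h_j, and let b ≥ 1. Then for all g, x, x′ ∈ ℝ^d, the average over all maps ξ : {1,…,b} → {1,…,n} (i.e., over all n^b mini-batches of size b drawn uniformly with replacement) satisfies n^{−b} Σ_{ξ} ‖g + (1/b)Σ_{k=1}^b (∇h_{ξ(k)}(x′) − ∇h_{ξ(k)}(x)) − ∇H(x′)‖² ≤ ‖g − ∇H(x)‖² + (L²/b)‖x′ − x‖². -/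
/-!
Replacing one coordinate of a uniform sample by an independent draw does not change its law. Hence
the centred summands of a mini-batch are uncorrelated, and the mean squared error of the batch
average splits into the squared bias plus `1 / b` times the variance of a single draw. The bias is
`g - ∇H(x)`, and the variance is at most the second moment of `∇h_j(x') - ∇h_j(x)`, which average
smoothness bounds by `L² ‖x' - x‖²`.
-/

open scoped BigOperators

noncomputable section

open Finset Function
open scoped Gradient

/-- The average of a finite family of vectors. `Finset.expect` plays this role for real families,
but a real vector space carries no `ℚ≥0`-module instance in general. Over an empty index type the
value is `0`. -/
def average {ι E : Type*} [Fintype ι] [AddCommGroup E] [Module ℝ E] (u : ι → E) : E :=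
  (Fintype.card ι : ℝ)⁻¹ • ∑ i, u i

section Average

variable {ι E : Type*} [Fintype ι] [AddCommGroup E] [Module ℝ E]

theorem average_const [Nonempty ι] (v : E) : average (fun _ : ι ↦ v) = v := by
  simp [average, ← Nat.cast_smul_eq_nsmul ℝ]

theorem average_sub (u v : ι → E) :
    average (fun i ↦ u i - v i) = average u - average v := by
  simp only [average, sum_sub_distrib, smul_sub]

theorem average_sub_average [Nonempty ι] (u : ι → E) :
    average (fun i ↦ u i - average u) = 0 := by
  rw [average_sub, average_const, sub_self]

theorem sum_eq_zero_of_average_eq_zero {u : ι → E} (hu : average u = 0) : ∑ i, u i = 0 := by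
  cases isEmpty_or_nonempty ι
  · simp
  · simpa [average] using hu

end Average

section Resampling

variable {ι κ M : Type*} [Fintype ι] [Nonempty ι] [Fintype κ] [DecidableEq κ]
  [AddCommMonoid M] [Module ℚ≥0 M]

theorem expect_expect_update (k : κ) (f : (κ → ι) → M) :
    𝔼 ξ, 𝔼 i, f (update ξ k i) = 𝔼 ξ, f ξ := by
  -- The drawn value and the old coordinate are exchangeable.
  have swap_involutive :
      Involutive fun p : (κ → ι) × ι ↦ (update p.1 k p.2, p.1 k) := fun p ↦ by simp
  calc 𝔼 ξ, 𝔼 i, f (update ξ k i)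
      = 𝔼 p : (κ → ι) × ι, f (update p.1 k p.2) := (expect_product' univ univ _).symm
    _ = 𝔼 p : (κ → ι) × ι, f p.1 :=
        Fintype.expect_equiv swap_involutive.toPerm _ _ fun _ ↦ rfl
    _ = 𝔼 ξ, 𝔼 _i : ι, f ξ := expect_product' univ univ fun ξ _ ↦ f ξ
    _ = 𝔼 ξ, f ξ := by simp only [Fintype.expect_const]

theorem expect_comp_eval (k : κ) (f : ι → M) : 𝔼 ξ : κ → ι, f (ξ k) = 𝔼 i, f i := by
  simp only [← expect_expect_update k fun ξ ↦ f (ξ k), update_self, Fintype.expect_const]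

end Resampling

section Variance

variable {ι κ E : Type*} [Fintype ι] [Nonempty ι] [NormedAddCommGroup E] [InnerProductSpace ℝ E]

theorem expect_norm_sub_average_sq (u : ι → E) :
    𝔼 i, ‖u i - average u‖ ^ 2 = 𝔼 i, ‖u i‖ ^ 2 - ‖average u‖ ^ 2 := by
  have expect_inner : 𝔼 i, inner ℝ (u i) (average u) = ‖average u‖ ^ 2 := by
    rw [Fintype.expect_eq_sum_div_card, ← sum_inner, div_eq_inv_mul, ← real_inner_smul_left,
      ← average, real_inner_self_eq_norm_sq]
  simp only [norm_sub_sq_real, expect_add_distrib, expect_sub_distrib, ← mul_expect, expect_inner,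
    Fintype.expect_const]
  ring

variable [Fintype κ] [DecidableEq κ]

theorem expect_inner_comp_eval_eq_zero {u : ι → E} (hu : average u = 0) (k : κ)
    {f : (κ → ι) → E} (hf : ∀ ξ i, f (update ξ k i) = f ξ) :
    𝔼 ξ : κ → ι, inner ℝ (f ξ) (u (ξ k)) = 0 := by
  rw [← expect_expect_update k]
  refine expect_eq_zero fun ξ _ ↦ ?_
  simp only [hf, update_self]
  rw [Fintype.expect_eq_sum_div_card, ← inner_sum, sum_eq_zero_of_average_eq_zero hu,
    inner_zero_right, zero_div]

theorem expect_norm_add_sum_comp_eval_sq {u : ι → E} (hu : average u = 0) (a : E)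
    (s : Finset κ) :
    𝔼 ξ : κ → ι, ‖a + ∑ k ∈ s, u (ξ k)‖ ^ 2 = ‖a‖ ^ 2 + #s * 𝔼 i, ‖u i‖ ^ 2 := by
  induction s using Finset.induction_on with
  | empty => simp
  | insert k s hk ih =>
    have uncorrelated :
        𝔼 ξ : κ → ι, inner ℝ (a + ∑ l ∈ s, u (ξ l)) (u (ξ k)) = 0 := by
      refine expect_inner_comp_eval_eq_zero hu k fun ξ i ↦ congrArg (a + ·) ?_
      exact sum_congr rfl fun l hl ↦ by rw [update_of_ne (ne_of_mem_of_not_mem hl hk)]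
    calc 𝔼 ξ : κ → ι, ‖a + ∑ l ∈ insert k s, u (ξ l)‖ ^ 2
        = 𝔼 ξ : κ → ι, ‖(a + ∑ l ∈ s, u (ξ l)) + u (ξ k)‖ ^ 2 := by
          simp only [sum_insert hk, add_comm (u _), add_assoc]
      _ = 𝔼 ξ : κ → ι, ‖a + ∑ l ∈ s, u (ξ l)‖ ^ 2 + 𝔼 i, ‖u i‖ ^ 2 := by
          simp only [norm_add_sq_real, expect_add_distrib, ← mul_expect, uncorrelated,
            expect_comp_eval k fun i ↦ ‖u i‖ ^ 2, mul_zero, add_zero]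
      _ = ‖a‖ ^ 2 + #(insert k s) * 𝔼 i, ‖u i‖ ^ 2 := by
          rw [ih, card_insert_of_notMem hk]
          push_cast
          ring

theorem expect_norm_add_average_comp_sq {u : ι → E} (hu : average u = 0) (a : E) :
    𝔼 ξ : κ → ι, ‖a + average fun k ↦ u (ξ k)‖ ^ 2
      = ‖a‖ ^ 2 + (𝔼 i, ‖u i‖ ^ 2) / Fintype.card κ := by
  set c : ℝ := (Fintype.card κ : ℝ)⁻¹ with hc
  have average_scaled : average (fun i ↦ c • u i) = 0 := by
    rw [average, ← smul_sum, sum_eq_zero_of_average_eq_zero hu, smul_zero, smul_zero]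
  have scaled := expect_norm_add_sum_comp_eval_sq average_scaled a (univ : Finset κ)
  simp only [norm_smul, mul_pow, ← mul_expect, ← smul_sum] at scaled
  rw [card_univ, Real.norm_eq_abs, sq_abs] at scaled
  simp only [average, ← hc, scaled]
  rcases eq_or_ne (Fintype.card κ : ℝ) 0 with h0 | h0
  · simp [h0]
  · rw [hc]
    field_simp

theorem expect_norm_add_average_comp_sub_average_sq_le [Nonempty κ] (u : ι → E) (a : E) :
    𝔼 ξ : κ → ι, ‖a + average (fun k ↦ u (ξ k)) - average u‖ ^ 2
      ≤ ‖a‖ ^ 2 + (𝔼 i, ‖u i‖ ^ 2) / Fintype.card κ :=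
  calc 𝔼 ξ : κ → ι, ‖a + average (fun k ↦ u (ξ k)) - average u‖ ^ 2
      = 𝔼 ξ : κ → ι, ‖a + average fun k ↦ (u (ξ k) - average u)‖ ^ 2 := by
        simp only [average_sub, average_const, add_sub_assoc]
    _ = ‖a‖ ^ 2 + (𝔼 i, ‖u i - average u‖ ^ 2) / Fintype.card κ :=
        expect_norm_add_average_comp_sq (average_sub_average u) a
    _ ≤ ‖a‖ ^ 2 + (𝔼 i, ‖u i‖ ^ 2) / Fintype.card κ := by
        rw [expect_norm_sub_average_sq]
        gcongr
        exact sub_le_self _ (sq_nonneg _)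

end Variance

section Gradient

variable {ι κ E : Type*} [Fintype ι] [NormedAddCommGroup E] [InnerProductSpace ℝ E]
  [CompleteSpace E]

theorem hasGradientAt_average {h : ι → E → ℝ} {h' : ι → E} {x : E}
    (hh : ∀ i, HasGradientAt (h i) (h' i) x) :
    HasGradientAt (fun y ↦ average fun i ↦ h i y) (average h') x := by
  rw [hasGradientAt_iff_hasFDerivAt]
  simpa only [average, map_smul, map_sum, smul_eq_mul] using
    (HasFDerivAt.fun_sum fun i _ ↦ (hh i).hasFDerivAt).const_mul (Fintype.card ι : ℝ)⁻¹

theorem gradient_average {h : ι → E → ℝ} {x : E} (hh : ∀ i, DifferentiableAt ℝ (h i) x) :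
    ∇ (fun y ↦ average fun i ↦ h i y) x = average fun i ↦ ∇ (h i) x :=
  (hasGradientAt_average fun i ↦ (hh i).hasGradientAt).gradient

theorem statement10_general [Nonempty ι] [Fintype κ] [DecidableEq κ] [Nonempty κ] {L : ℝ}
    {h : ι → E → ℝ} {H : E → ℝ} (hH : ∀ y, H y = average fun i ↦ h i y) {x x' : E}
    (hx : ∀ i, DifferentiableAt ℝ (h i) x) (hx' : ∀ i, DifferentiableAt ℝ (h i) x')
    (hL : 𝔼 i, ‖∇ (h i) x' - ∇ (h i) x‖ ^ 2 ≤ L ^ 2 * ‖x' - x‖ ^ 2) (g : E) :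
    𝔼 ξ : κ → ι, ‖g + average (fun k ↦ ∇ (h (ξ k)) x' - ∇ (h (ξ k)) x) - ∇ H x'‖ ^ 2
      ≤ ‖g - ∇ H x‖ ^ 2 + L ^ 2 / Fintype.card κ * ‖x' - x‖ ^ 2 := by
  set D : ι → E := fun i ↦ ∇ (h i) x' - ∇ (h i) x
  have average_D : average D = ∇ H x' - ∇ H x := by
    rw [average_sub, funext hH, gradient_average hx, gradient_average hx']
  calc 𝔼 ξ : κ → ι, ‖g + average (fun k ↦ D (ξ k)) - ∇ H x'‖ ^ 2
      = 𝔼 ξ : κ → ι, ‖(g - ∇ H x) + average (fun k ↦ D (ξ k)) - average D‖ ^ 2 := by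
        refine expect_congr rfl fun ξ _ ↦ ?_
        rw [average_D]
        congr 2
        abel
    _ ≤ ‖g - ∇ H x‖ ^ 2 + (𝔼 i, ‖D i‖ ^ 2) / Fintype.card κ :=
        expect_norm_add_average_comp_sub_average_sq_le D _
    _ ≤ ‖g - ∇ H x‖ ^ 2 + L ^ 2 / Fintype.card κ * ‖x' - x‖ ^ 2 := by
        rw [div_mul_eq_mul_div]
        gcongr

end Gradient

theorem statement10 (n d b : ℕ) (hn : 1 ≤ n) (hb : 1 ≤ b) (L : ℝ)
    (h : Fin n → EuclideanSpace ℝ (Fin d) → ℝ)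
    (hdiff : ∀ j, Differentiable ℝ (h j))
    (havg : ∀ x x' : EuclideanSpace ℝ (Fin d),
      (n : ℝ)⁻¹ * ∑ j, ‖gradient (h j) x - gradient (h j) x'‖ ^ 2 ≤ L ^ 2 * ‖x - x'‖ ^ 2)
    (H : EuclideanSpace ℝ (Fin d) → ℝ)
    (hH : ∀ x, H x = (n : ℝ)⁻¹ * ∑ j, h j x)
    (g x x' : EuclideanSpace ℝ (Fin d)) :
    ((n : ℝ) ^ b)⁻¹ * ∑ ξ : Fin b → Fin n,
        ‖g + (b : ℝ)⁻¹ • (∑ k, (gradient (h (ξ k)) x' - gradient (h (ξ k)) x)) - gradient H x'‖ ^ 2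
      ≤ ‖g - gradient H x‖ ^ 2 + (L ^ 2 / (b : ℝ)) * ‖x' - x‖ ^ 2 := by
  have : NeZero n := ⟨by lia⟩
  have : NeZero b := ⟨by lia⟩
  have H_eq_average : ∀ y, H y = average fun j ↦ h j y := by simpa [average] using hH
  have average_smooth : 𝔼 j, ‖∇ (h j) x' - ∇ (h j) x‖ ^ 2 ≤ L ^ 2 * ‖x' - x‖ ^ 2 := by
    simpa [Fintype.expect_eq_sum_div_card, div_eq_inv_mul] using havg x' x
  simpa [average, Fintype.expect_eq_sum_div_card, div_eq_inv_mul] using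
    statement10_general (κ := Fin b) H_eq_average (fun j ↦ hdiff j x) (fun j ↦ hdiff j x')
      average_smooth g
end
end

section
/- Let L > 0, η = 1/(2L), and let m, n, b be positive integers with m b² ≥ 36 n; set p = b/(b+n). Let 0 ≤ ρ ≤ ρ̂ be reals with 296 ρ̂² ≤ 1 and 4 m p ρ² ≤ 1. Suppose the real numbers F, F⁺ and the nonnegative real numbers U, U⁺, V, V⁺, C, C⁺, G, D satisfy: (A) F⁺ ≤ F − (η/2)G + ηU + (L²η/m)C − (1/(2η) − L/2)D; (B) U⁺ ≤ (1−p)U + (9(1−p)L²/(m²b))C + (3(1−p)L²/(mb))D; (C) V⁺ ≤ (1−p)V + (9(1−p)L²/(mb))C + (3(1−p)L²/b)D; (D) C⁺ ≤ (1/4)C + 4ρ²pη²mV + 6(ρ̂²(1−p)/b + 2ρ²p)mD. Then the Lyapunov quantity Φ = F + (η/p)U + (η/(mp))V + (1/(mη))C decreases: F⁺ + (η/p)U⁺ + (η/(mp))V⁺ + (1/(mη))C⁺ ≤ Φ − (η/2)G − (3/(8mη))C. -/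
/-!
Since `V / m` obeys the same recursion as `U`, the weights `η / p` and `η / (m * p)` treat the two
gradient errors alike: each loses `η` times itself in one step and receives drift whose factor
`(1 - p) / (p * m * b)` is at most `1 / 36`. The loss in `U` pays for `η * U` in the recursion for
the function value, and the loss in `V / m` pays for the `V` term of the consensus recursion because
`4 * m * p * ρ ^ 2 ≤ 1`. What remains are multiples of `C / (m * η)` and of `D / η`, which balance
because `L * η ≤ 1 / 2` turns `L ^ 2 * η` into at most `1 / (4 * η)` and `L` into at most
`1 / (2 * η)`.
-/

/-- The Lyapunov function of DEAREST with step size `η`, refresh probability `p` and `m` agents,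
where `F` is the function value, `U` and `V` are the global and local gradient estimation errors
and `C` is the consensus error. -/
noncomputable def dearestLyapunov (η p m F U V C : ℝ) : ℝ :=
  F + (η / p) * U + (η / (m * p)) * V + (1 / (m * η)) * C

section

variable {L η p m b ρ ρh C D : ℝ}

lemma mul_one_sub_div_add_le {n c : ℝ} (hb : 0 < b) (hn : 0 ≤ n) (h : c * n ≤ m * b ^ 2) :
    c * (1 - b / (b + n)) ≤ b / (b + n) * (m * b) := by
  have : 0 < b + n := by positivity
  calc c * (1 - b / (b + n)) = c * n / (b + n) := by field_simp; ring
    _ ≤ m * b ^ 2 / (b + n) := by gcongr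
    _ = b / (b + n) * (m * b) := by ring

lemma sq_mul_le_one_div_four_mul (hL : 0 ≤ L) (hη : 0 < η) (hLη : L * η ≤ 1 / 2) :
    L ^ 2 * η ≤ 1 / (4 * η) := by
  rw [le_div_iff₀ (by positivity)]
  calc L ^ 2 * η * (4 * η) = 4 * (L * η) ^ 2 := by ring
    _ ≤ 4 * (1 / 2) ^ 2 := by gcongr
    _ = 1 := by norm_num

lemma weighted_gradient_error_le {E E' : ℝ} (hη : 0 ≤ η) (hp : 0 < p) (hm : 0 < m) (hb : 0 < b)
    (hpmb : 36 * (1 - p) ≤ p * (m * b)) (hC : 0 ≤ C) (hD : 0 ≤ D)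
    (hE : E' ≤ (1 - p) * E + (9 * (1 - p) * L ^ 2 / (m ^ 2 * b)) * C
      + (3 * (1 - p) * L ^ 2 / (m * b)) * D) :
    η / p * E' ≤ η / p * E - η * E + L ^ 2 * η / 4 * (C / m) + L ^ 2 * η / 12 * D := by
  have drift_factor : (1 - p) / (p * (m * b)) ≤ 1 / 36 := by
    rw [div_le_div_iff₀ (by positivity) (by norm_num)]
    linarith
  calc η / p * E'
      ≤ η / p * ((1 - p) * E + (9 * (1 - p) * L ^ 2 / (m ^ 2 * b)) * C
          + (3 * (1 - p) * L ^ 2 / (m * b)) * D) := by gcongr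
    _ = η / p * E - η * E
          + (1 - p) / (p * (m * b)) * (L ^ 2 * η * (9 * (C / m) + 3 * D)) := by
        field_simp
        ring
    _ ≤ η / p * E - η * E + 1 / 36 * (L ^ 2 * η * (9 * (C / m) + 3 * D)) := by gcongr
    _ = η / p * E - η * E + L ^ 2 * η / 4 * (C / m) + L ^ 2 * η / 12 * D := by ring

lemma consensus_drift_le (hb : 1 ≤ b) (hp₀ : 0 ≤ p) (hp₁ : p ≤ 1) (hρ : ρ ^ 2 ≤ ρh ^ 2) :
    ρh ^ 2 * (1 - p) / b + 2 * ρ ^ 2 * p ≤ 2 * ρh ^ 2 := by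
  have : 0 ≤ 1 - p := sub_nonneg.mpr hp₁
  calc ρh ^ 2 * (1 - p) / b + 2 * ρ ^ 2 * p
      ≤ ρh ^ 2 * (1 - p) + 2 * ρh ^ 2 * p := by
        gcongr
        exact div_le_self (by positivity) hb
    _ = ρh ^ 2 * (1 + p) := by ring
    _ ≤ ρh ^ 2 * (1 + 1) := by gcongr
    _ = 2 * ρh ^ 2 := by ring

lemma weighted_consensus_error_le {V C' : ℝ} (hη : 0 < η) (hm : 0 < m) (hb : 1 ≤ b)
    (hp₀ : 0 ≤ p) (hp₁ : p ≤ 1) (hρ : ρ ^ 2 ≤ ρh ^ 2) (hρh : 288 * ρh ^ 2 ≤ 5)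
    (hmpρ : 4 * m * p * ρ ^ 2 ≤ 1) (hV : 0 ≤ V) (hD : 0 ≤ D)
    (hC' : C' ≤ (1 / 4) * C + 4 * ρ ^ 2 * p * η ^ 2 * m * V
      + 6 * (ρh ^ 2 * (1 - p) / b + 2 * ρ ^ 2 * p) * m * D) :
    1 / (m * η) * C' ≤ 1 / (4 * η) * (C / m) + η * (V / m) + 5 / (24 * η) * D := by
  have drift : ρh ^ 2 * (1 - p) / b + 2 * ρ ^ 2 * p ≤ 5 / 144 := by
    linarith [consensus_drift_le hb hp₀ hp₁ hρ]
  calc 1 / (m * η) * C'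
      ≤ 1 / (m * η) * ((1 / 4) * C + 4 * ρ ^ 2 * p * η ^ 2 * m * V
          + 6 * (ρh ^ 2 * (1 - p) / b + 2 * ρ ^ 2 * p) * m * D) := by gcongr
    _ ≤ 1 / (m * η) * ((1 / 4) * C + 4 * ρ ^ 2 * p * η ^ 2 * m * V
          + 6 * (5 / 144) * m * D) := by gcongr
    _ = 1 / (4 * η) * (C / m) + 4 * m * p * ρ ^ 2 * (η * (V / m)) + 5 / (24 * η) * D := by
        field_simp
        ring
    _ ≤ 1 / (4 * η) * (C / m) + 1 * (η * (V / m)) + 5 / (24 * η) * D := by gcongr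
    _ = 1 / (4 * η) * (C / m) + η * (V / m) + 5 / (24 * η) * D := by rw [one_mul]

lemma consensus_coefficient_balance (hL : 0 ≤ L) (hη : 0 < η) (hLη : L * η ≤ 1 / 2)
    (hm : 0 < m) (hC : 0 ≤ C) :
    (L ^ 2 * η / m) * C + 2 * (L ^ 2 * η / 4 * (C / m)) + 1 / (4 * η) * (C / m)
      ≤ (1 / (m * η)) * C - (3 / (8 * m * η)) * C := by
  calc (L ^ 2 * η / m) * C + 2 * (L ^ 2 * η / 4 * (C / m)) + 1 / (4 * η) * (C / m)
      = (3 / 2 * (L ^ 2 * η) + 1 / (4 * η)) * (C / m) := by ring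
    _ ≤ (3 / 2 * (1 / (4 * η)) + 1 / (4 * η)) * (C / m) := by
        gcongr ?_ * _
        linarith [sq_mul_le_one_div_four_mul hL hη hLη]
    _ = (1 / (m * η)) * C - (3 / (8 * m * η)) * C := by
        field_simp
        ring

-- In units of `D / η` the balance is `1 / 24 + 5 / 24 = 1 / 2 - 1 / 4`; the share `5 / 24` left for
-- the consensus drift is what fixes the bound `5 / 288` on `ρh ^ 2`.
lemma displacement_coefficient_balance (hL : 0 ≤ L) (hη : 0 < η) (hLη : L * η ≤ 1 / 2)
    (hD : 0 ≤ D) :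
    2 * (L ^ 2 * η / 12 * D) + 5 / (24 * η) * D ≤ (1 / (2 * η) - L / 2) * D := by
  have hL_le : L ≤ 1 / 2 / η := (le_div_iff₀ hη).mpr hLη
  calc 2 * (L ^ 2 * η / 12 * D) + 5 / (24 * η) * D
      = (1 / 6 * (L ^ 2 * η) + 5 / (24 * η)) * D := by ring
    _ ≤ (1 / 6 * (1 / (4 * η)) + 5 / (24 * η)) * D := by
        gcongr ?_ * _
        linarith [sq_mul_le_one_div_four_mul hL hη hLη]
    _ = (1 / (2 * η) - 1 / 2 / η / 2) * D := by
        field_simp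
        ring
    _ ≤ (1 / (2 * η) - L / 2) * D := by gcongr

theorem statement14_general {F F' U U' V V' C' G : ℝ}
    (hL : 0 ≤ L) (hη : 0 < η) (hLη : L * η ≤ 1 / 2) (hm : 0 < m) (hb : 1 ≤ b)
    (hp₀ : 0 < p) (hp₁ : p ≤ 1) (hpmb : 36 * (1 - p) ≤ p * (m * b))
    (hρ : ρ ^ 2 ≤ ρh ^ 2) (hρh : 288 * ρh ^ 2 ≤ 5) (hmpρ : 4 * m * p * ρ ^ 2 ≤ 1)
    (hV : 0 ≤ V) (hC : 0 ≤ C) (hD : 0 ≤ D)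
    (hF' : F' ≤ F - (η / 2) * G + η * U + (L ^ 2 * η / m) * C - (1 / (2 * η) - L / 2) * D)
    (hU' : U' ≤ (1 - p) * U + (9 * (1 - p) * L ^ 2 / (m ^ 2 * b)) * C
      + (3 * (1 - p) * L ^ 2 / (m * b)) * D)
    (hV' : V' ≤ (1 - p) * V + (9 * (1 - p) * L ^ 2 / (m * b)) * C
      + (3 * (1 - p) * L ^ 2 / b) * D)
    (hC' : C' ≤ (1 / 4) * C + 4 * ρ ^ 2 * p * η ^ 2 * m * V
      + 6 * (ρh ^ 2 * (1 - p) / b + 2 * ρ ^ 2 * p) * m * D) :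
    dearestLyapunov η p m F' U' V' C'
      ≤ dearestLyapunov η p m F U V C - (η / 2) * G - (3 / (8 * m * η)) * C := by
  have hb₀ : 0 < b := by linarith
  have hVm : V' / m ≤ (1 - p) * (V / m) + (9 * (1 - p) * L ^ 2 / (m ^ 2 * b)) * C
      + (3 * (1 - p) * L ^ 2 / (m * b)) * D := by
    calc V' / m ≤ ((1 - p) * V + (9 * (1 - p) * L ^ 2 / (m * b)) * C
          + (3 * (1 - p) * L ^ 2 / b) * D) / m := by gcongr
      _ = _ := by field_simp
  have weight_V (x : ℝ) : η / (m * p) * x = η / p * (x / m) := by ring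
  have global_error := weighted_gradient_error_le hη.le hp₀ hm hb₀ hpmb hC hD hU'
  have local_error := weighted_gradient_error_le hη.le hp₀ hm hb₀ hpmb hC hD hVm
  have consensus_error := weighted_consensus_error_le hη hm hb hp₀.le hp₁ hρ hρh hmpρ hV hD hC'
  have balance_C := consensus_coefficient_balance hL hη hLη hm hC
  have balance_D := displacement_coefficient_balance hL hη hLη hD
  simp only [dearestLyapunov, weight_V]
  linarith

end

theorem statement14 (L η : ℝ) (hL : 0 < L) (hη : η = 1 / (2 * L))
    (m n b : ℕ) (hm : 1 ≤ m) (hn : 1 ≤ n) (hb : 1 ≤ b)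
    (hmb : 36 * n ≤ m * b ^ 2)
    (p : ℝ) (hp : p = (b : ℝ) / ((b : ℝ) + (n : ℝ)))
    (rho rhoh : ℝ) (hrho0 : 0 ≤ rho) (hrhole : rho ≤ rhoh)
    (h296 : 296 * rhoh ^ 2 ≤ 1) (h4 : 4 * (m : ℝ) * p * rho ^ 2 ≤ 1)
    (F Fp U Up V Vp C Cp G D : ℝ)
    (hU : 0 ≤ U) (hUp : 0 ≤ Up) (hV : 0 ≤ V) (hVp : 0 ≤ Vp)
    (hC : 0 ≤ C) (hCp : 0 ≤ Cp) (hG : 0 ≤ G) (hD : 0 ≤ D)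
    (hA : Fp ≤ F - (η / 2) * G + η * U + (L ^ 2 * η / (m : ℝ)) * C
      - (1 / (2 * η) - L / 2) * D)
    (hB : Up ≤ (1 - p) * U + (9 * (1 - p) * L ^ 2 / ((m : ℝ) ^ 2 * (b : ℝ))) * C
      + (3 * (1 - p) * L ^ 2 / ((m : ℝ) * (b : ℝ))) * D)
    (hCrec : Vp ≤ (1 - p) * V + (9 * (1 - p) * L ^ 2 / ((m : ℝ) * (b : ℝ))) * C
      + (3 * (1 - p) * L ^ 2 / (b : ℝ)) * D)
    (hDrec : Cp ≤ (1 / 4) * C + 4 * rho ^ 2 * p * η ^ 2 * (m : ℝ) * V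
      + 6 * (rhoh ^ 2 * (1 - p) / (b : ℝ) + 2 * rho ^ 2 * p) * (m : ℝ) * D) :
    Fp + (η / p) * Up + (η / ((m : ℝ) * p)) * Vp + (1 / ((m : ℝ) * η)) * Cp
      ≤ (F + (η / p) * U + (η / ((m : ℝ) * p)) * V + (1 / ((m : ℝ) * η)) * C)
        - (η / 2) * G - (3 / (8 * (m : ℝ) * η)) * C := by
  subst hη hp
  have hb₀ : (0 : ℝ) < b := by exact_mod_cast hb
  exact statement14_general hL.le (by positivity) (le_of_eq (by field_simp)) (mod_cast hm)
    (mod_cast hb) (by positivity) (div_le_one_of_le₀ (by simp) (by positivity))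
    (mul_one_sub_div_add_le hb₀ n.cast_nonneg (mod_cast hmb)) (pow_le_pow_left₀ hrho0 hrhole 2)
    (by linarith) h4 hV hC hD hA hB hCrec hDrec
end
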